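/- Let {a_n}_{n≥1} be reals with 0 < a_1 ≤ a_2 ≤ … and Σ_{n=1}^∞ 1/a_n² < ∞, let α, β ∈ ℝ, and let f be the entire function f(z) = e^{αz+β} Π_{n=1}^∞ (1 + z/a_n) e^{-z/a_n} (a real entire function of genus 1 with only negative zeros and f(0) > 0). For s > 0 define h(z) = log f(z) - log f(z+s) = -αs + Σ_{n=1}^∞ ( Log(1 + z/a_n) - Log(1 + (z+s)/a_n) + s/a_n ) for z ∈ ℂ \ (-∞,0], where Log is the principal logarithm. Then h is a Pick function: Im h(z) ≥ 0 whenever Im z > 0. Moreover lim_{y→∞} h(iy)/(iy) = 0. -/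

import Mathlib

open MeasureTheory Filter Set

/-- The Laplace transform of `g`. -/
noncomputable def LaplaceTransform (g : ℝ → ℝ) (x : ℝ) : ℝ :=
  ∫ t in Set.Ioi (0:ℝ), Real.exp (-x * t) * g t

/-- `f` is completely monotonic on `(0,∞)`. -/
def CompletelyMonotonic (f : ℝ → ℝ) : Prop :=
  (∀ x : ℝ, 0 < x → ContDiffAt ℝ (⊤ : ℕ∞) f x) ∧
  ∀ (n : ℕ) (x : ℝ), 0 < x → 0 ≤ (-1 : ℝ) ^ n * iteratedDeriv n f x

/-- `f` is logarithmically completely monotonic on `(0,∞)`. -/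
def LogCompletelyMonotonic (f : ℝ → ℝ) : Prop :=
  (∀ x : ℝ, 0 < x → 0 < f x) ∧ (∀ x : ℝ, 0 < x → ContDiffAt ℝ (⊤ : ℕ∞) f x) ∧
  CompletelyMonotonic (fun x => -deriv f x / f x)

/-- `f` is a generalized Stieltjes function of order `lam` on `(0,∞)`. -/
def IsGenStieltjes (lam : ℝ) (f : ℝ → ℝ) : Prop :=
  ∃ (μ : Measure ℝ) (c : ℝ), 0 ≤ c ∧ μ (Set.Iio 0) = 0 ∧
    ∀ x : ℝ, 0 < x →
      Integrable (fun t => (x + t) ^ (-lam)) μ ∧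
      f x = (∫ t, (x + t) ^ (-lam) ∂μ) + c

/-- Nielsen's beta function. -/
noncomputable def nielsenBeta (x : ℝ) : ℝ :=
  ∫ t in Set.Ioi (0:ℝ), Real.exp (-x * t) / (1 + Real.exp (-t))

/-!
Each summand is `L (z / aₙ) - L ((z + s) / aₙ)` with `L w = log (1 + w) - w`, the logarithm of a
Weierstrass primary factor. Since `L w = O(w²)` at `0`, the series converges. Moving a point of the
upper half-plane to the right decreases its argument, so every summand has nonnegative imaginary
part. Finally, the derivative `-w / (1 + w)` of `L` is bounded by both `1` and `‖w‖` on the right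
half-plane. The first bound keeps each summand bounded there, hence `o(z)`; the second bounds the
summand divided by `z` by a constant times `aₙ⁻²`, so the limit can be taken termwise by dominated
convergence.
-/

section PrimaryFactor

open Complex Bornology

/-- The principal logarithm of the genus-one Weierstrass primary factor `(1 + w) * exp (-w)`. -/
noncomputable def logPrimaryFactor (w : ℂ) : ℂ :=
  log (1 + w) - w

theorem summable_logPrimaryFactor {ι : Type*} {w : ι → ℂ} (hw : Summable fun i => ‖w i‖ ^ 2) :
    Summable fun i => logPrimaryFactor (w i) := by
  have tendsto_sqrt_sq : Tendsto (fun i => √(‖w i‖ ^ 2)) cofinite (nhds √0) :=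
    hw.tendsto_cofinite_zero.sqrt
  have tendsto_zero : Tendsto w cofinite (nhds 0) := by
    rw [tendsto_zero_iff_norm_tendsto_zero]
    simpa only [Real.sqrt_sq (norm_nonneg _), Real.sqrt_zero] using tendsto_sqrt_sq
  refine summable_of_isBigO hw ?_
  simpa only [Function.comp_def, norm_pow, logPrimaryFactor] using
    (log_sub_self_isBigO.comp_tendsto tendsto_zero).norm_right

theorem antitone_arg_add_ofReal {w : ℂ} (hw : 0 < w.im) :
    Antitone fun t : ℝ => arg (w + t) := by
  have hasDerivAt_arg (t : ℝ) : HasDerivAt (fun t : ℝ => arg (w + t)) ((w + t)⁻¹).im t := by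
    have mem_slitPlane : w + t ∈ slitPlane := Or.inr (by simpa using hw.ne')
    have hasDerivAt_log : HasDerivAt (fun t : ℝ => log (w + t)) (w + t)⁻¹ t := by
      simpa only [ofRealCLM_apply, ofReal_one, one_div] using
        (ofRealCLM.hasDerivAt.const_add w).clog_real mem_slitPlane
    simpa only [Function.comp_def, imCLM_apply, log_im] using
      imCLM.hasFDerivAt.comp_hasDerivAt t hasDerivAt_log
  refine antitone_of_hasDerivAt_nonpos hasDerivAt_arg fun t => ?_
  rw [inv_im, add_im, ofReal_im, add_zero]
  exact div_nonpos_of_nonpos_of_nonneg (neg_nonpos.2 hw.le) (normSq_nonneg _)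

theorem im_logPrimaryFactor_add_ofReal_le {w : ℂ} (hw : 0 < w.im) {r : ℝ} (hr : 0 ≤ r) :
    (logPrimaryFactor (w + r)).im ≤ (logPrimaryFactor w).im := by
  have arg_le : arg (1 + w + r) ≤ arg (1 + w) := by
    simpa using antitone_arg_add_ofReal (w := 1 + w) (by simpa using hw) hr
  simpa [logPrimaryFactor, log_im, add_assoc] using arg_le

theorem one_le_norm_one_add {w : ℂ} (hw : 0 ≤ w.re) : 1 ≤ ‖1 + w‖ :=
  (by simpa using hw : (1 : ℝ) ≤ (1 + w).re).trans (re_le_norm _)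

theorem norm_le_norm_one_add {w : ℂ} (hw : 0 ≤ w.re) : ‖w‖ ≤ ‖1 + w‖ := by
  refine (sq_le_sq₀ (norm_nonneg _) (norm_nonneg _)).1 ?_
  simp only [Complex.sq_norm, normSq_apply, add_re, add_im, one_re, one_im]
  linarith

theorem hasDerivAt_logPrimaryFactor {w : ℂ} (hw : 1 + w ∈ slitPlane) :
    HasDerivAt logPrimaryFactor (-w / (1 + w)) w := by
  refine (((hasDerivAt_id w).const_add 1).clog hw |>.sub (hasDerivAt_id w)).congr_deriv ?_
  have one_add_ne_zero : 1 + w ≠ 0 := slitPlane_ne_zero hw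
  simp only [id_eq]
  field_simp
  ring

theorem norm_neg_div_one_add_le {w : ℂ} (hw : 0 ≤ w.re) : ‖-w / (1 + w)‖ ≤ min 1 ‖w‖ := by
  rw [norm_div, norm_neg]
  exact le_min (div_le_one_of_le₀ (norm_le_norm_one_add hw) (norm_nonneg _))
    (div_le_self (norm_nonneg _) (one_le_norm_one_add hw))

theorem norm_logPrimaryFactor_sub_le {v w : ℂ} {R : ℝ} (hv : 0 ≤ v.re) (hw : 0 ≤ w.re)
    (hvR : ‖v‖ ≤ R) (hwR : ‖w‖ ≤ R) :
    ‖logPrimaryFactor v - logPrimaryFactor w‖ ≤ min 1 R * ‖v - w‖ := by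
  have convex_halfDisc : Convex ℝ ({u : ℂ | 0 ≤ u.re} ∩ Metric.closedBall 0 R) :=
    (convex_halfSpace_re_ge 0).inter (convex_closedBall 0 R)
  refine convex_halfDisc.norm_image_sub_le_of_norm_hasDerivWithin_le
    (f' := fun u => -u / (1 + u)) (fun u hu => ?_) (fun u hu => ?_)
    ⟨hw, mem_closedBall_zero_iff.2 hwR⟩ ⟨hv, mem_closedBall_zero_iff.2 hvR⟩
  · have re_one_add_pos : 0 < (1 + u).re := by
      simpa using add_pos_of_pos_of_nonneg one_pos hu.1
    exact (hasDerivAt_logPrimaryFactor (Or.inl re_one_add_pos)).hasDerivWithinAt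
  · exact (norm_neg_div_one_add_le hu.1).trans
      (min_le_min_left 1 (mem_closedBall_zero_iff.1 hu.2))

theorem logPrimaryFactor_div_sub_logPrimaryFactor_add_div (a z s : ℂ) :
    logPrimaryFactor (z / a) - logPrimaryFactor ((z + s) / a) =
      log (1 + z / a) - log (1 + (z + s) / a) + s / a := by
  simp only [logPrimaryFactor]
  ring

theorem norm_logPrimaryFactor_div_sub_le {a : ℝ} (ha : 0 < a) {s z : ℂ} (hs : 0 ≤ s.re)
    (hz : 0 ≤ z.re) :
    ‖logPrimaryFactor (z / a) - logPrimaryFactor ((z + s) / a)‖ ≤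
      min 1 ((‖z‖ + ‖s‖) / a) * (‖s‖ / a) := by
  have norm_div_a (w : ℂ) : ‖w / a‖ = ‖w‖ / a := by
    rw [norm_div, norm_real, Real.norm_of_nonneg ha.le]
  have re_div_a_nonneg {w : ℂ} (hw : 0 ≤ w.re) : 0 ≤ (w / a).re := by
    rw [div_ofReal_re]
    exact div_nonneg hw ha.le
  have norm_sub_eq : ‖z / a - (z + s) / a‖ = ‖s‖ / a := by
    rw [← sub_div, sub_add_cancel_left, norm_div_a, norm_neg]
  rw [← norm_sub_eq]
  refine norm_logPrimaryFactor_sub_le (re_div_a_nonneg hz)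
    (re_div_a_nonneg (by simpa using add_nonneg hz hs)) ?_ ?_
  · rw [norm_div_a]
    gcongr
    exact le_add_of_nonneg_right (norm_nonneg s)
  · rw [norm_div_a]
    gcongr
    exact norm_add_le z s

theorem norm_logPrimaryFactor_div_sub_div_le {a : ℝ} (ha : 0 < a) {s z : ℂ} (hs : 0 ≤ s.re)
    (hz : 0 ≤ z.re) (hz_norm : 1 ≤ ‖z‖) :
    ‖(logPrimaryFactor (z / a) - logPrimaryFactor ((z + s) / a)) / z‖ ≤
      (1 + ‖s‖) * ‖s‖ * (1 / a ^ 2) := by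
  rw [norm_div, div_le_iff₀ (one_pos.trans_le hz_norm)]
  calc ‖logPrimaryFactor (z / a) - logPrimaryFactor ((z + s) / a)‖
      ≤ (‖z‖ + ‖s‖) / a * (‖s‖ / a) :=
        (norm_logPrimaryFactor_div_sub_le ha hs hz).trans (by gcongr; exact min_le_right _ _)
    _ ≤ (‖z‖ + ‖s‖ * ‖z‖) / a * (‖s‖ / a) := by
        gcongr
        exact le_mul_of_one_le_right (norm_nonneg s) hz_norm
    _ = (1 + ‖s‖) * ‖s‖ * (1 / a ^ 2) * ‖z‖ := by ring

theorem tendsto_const_div_cobounded {𝕜 : Type*} [NormedDivisionRing 𝕜] (c : 𝕜) :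
    Tendsto (fun z : 𝕜 => c / z) (cobounded 𝕜) (nhds 0) := by
  simpa only [mul_zero, div_eq_mul_inv] using tendsto_inv₀_cobounded.const_mul c

theorem tendsto_logPrimaryFactor_div_sub_div {a : ℝ} (ha : 0 < a) {s : ℂ} (hs : 0 ≤ s.re) :
    Tendsto (fun z : ℂ => (logPrimaryFactor (z / a) - logPrimaryFactor ((z + s) / a)) / z)
      (cobounded ℂ ⊓ 𝓟 {z | 0 ≤ z.re}) (nhds 0) := by
  have bound_tendsto : Tendsto (fun z : ℂ => ‖((‖s‖ / a : ℝ) : ℂ) / z‖)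
      (cobounded ℂ ⊓ 𝓟 {z | 0 ≤ z.re}) (nhds 0) := by
    simpa only [norm_zero] using
      ((tendsto_const_div_cobounded (𝕜 := ℂ) _).mono_left inf_le_left).norm
  refine squeeze_zero_norm' ?_ bound_tendsto
  filter_upwards [mem_inf_of_right (mem_principal_self _)] with z hz
  rw [norm_div, norm_div, norm_real, Real.norm_of_nonneg (by positivity)]
  gcongr
  calc ‖logPrimaryFactor (z / a) - logPrimaryFactor ((z + s) / a)‖
      ≤ min 1 ((‖z‖ + ‖s‖) / a) * (‖s‖ / a) := norm_logPrimaryFactor_div_sub_le ha hs hz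
    _ ≤ 1 * (‖s‖ / a) := by gcongr; exact min_le_left _ _
    _ = ‖s‖ / a := one_mul _

end PrimaryFactor

section LogShift

open Complex Bornology

variable {ι : Type*} {a : ι → ℝ}

/-- The difference `log f z - log f (z + s)` for
`f z = exp (α * z + β) * ∏ i, (1 + z / a i) * exp (-z / a i)`, written as a series of logarithms of
primary factors; the constant `β` cancels. -/
noncomputable def logShift (a : ι → ℝ) (α s z : ℂ) : ℂ :=
  -(α * s) + ∑' i, (logPrimaryFactor (z / a i) - logPrimaryFactor ((z + s) / a i))

theorem summable_logPrimaryFactor_div (hsum : Summable fun i => 1 / a i ^ 2) (z : ℂ) :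
    Summable fun i => logPrimaryFactor (z / a i) := by
  refine summable_logPrimaryFactor ((hsum.mul_left (‖z‖ ^ 2)).congr fun i => ?_)
  rw [norm_div, norm_real, div_pow, Real.norm_eq_abs, sq_abs, mul_one_div]

theorem im_logShift_nonneg (ha : ∀ i, 0 < a i) (hsum : Summable fun i => 1 / a i ^ 2) (α : ℝ)
    {s : ℝ} (hs : 0 ≤ s) {z : ℂ} (hz : 0 < z.im) : 0 ≤ (logShift a α s z).im := by
  have summable_terms :=
    (summable_logPrimaryFactor_div hsum z).sub (summable_logPrimaryFactor_div hsum (z + s))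
  have im_const : (-((α : ℂ) * s)).im = 0 := by simp
  rw [logShift, add_im, im_const, zero_add, im_tsum summable_terms]
  refine tsum_nonneg fun i => ?_
  have im_div_pos : 0 < (z / a i).im := by
    rw [div_ofReal_im]
    exact div_pos hz (ha i)
  have add_div_eq : (z + s) / a i = z / a i + (s / a i : ℝ) := by
    push_cast
    exact add_div z (s : ℂ) (a i)
  rw [sub_im, sub_nonneg, add_div_eq]
  exact im_logPrimaryFactor_add_ofReal_le im_div_pos (div_nonneg hs (ha i).le)

theorem tendsto_logShift_div (ha : ∀ i, 0 < a i) (hsum : Summable fun i => 1 / a i ^ 2) (α : ℂ)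
    {s : ℂ} (hs : 0 ≤ s.re) :
    Tendsto (fun z => logShift a α s z / z) (cobounded ℂ ⊓ 𝓟 {z | 0 ≤ z.re}) (nhds 0) := by
  have tendsto_const :
      Tendsto (fun z => -(α * s) / z) (cobounded ℂ ⊓ 𝓟 {z | 0 ≤ z.re}) (nhds 0) :=
    (tendsto_const_div_cobounded _).mono_left inf_le_left
  have one_le_norm : ∀ᶠ z in cobounded ℂ, 1 ≤ ‖z‖ :=
    tendsto_norm_cobounded_atTop.eventually_ge_atTop 1
  have tendsto_series := tendsto_tsum_of_dominated_convergence
    (hsum.mul_left ((1 + ‖s‖) * ‖s‖))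
    (fun i => tendsto_logPrimaryFactor_div_sub_div (ha i) hs) (by
      filter_upwards [one_le_norm.filter_mono inf_le_left,
        mem_inf_of_right (mem_principal_self _)] with z hz_norm hz i
      exact norm_logPrimaryFactor_div_sub_div_le (ha i) hs hz hz_norm)
  simpa only [logShift, add_div, tsum_div_const, tsum_zero, add_zero] using
    tendsto_const.add tendsto_series

theorem tendsto_ofReal_mul_I_cobounded_rightHalfPlane :
    Tendsto (fun y : ℝ => (y : ℂ) * I) atTop (cobounded ℂ ⊓ 𝓟 {z | 0 ≤ z.re}) := by
  refine tendsto_inf.2 ⟨?_, tendsto_principal.2 (Eventually.of_forall fun y => by simp)⟩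
  simpa [← tendsto_norm_atTop_iff_cobounded] using tendsto_abs_atTop_atTop

end LogShift

/-- Theorem: for a real entire function `f` of genus 1 with only negative zeros `-aₙ` and
`f(0) > 0`, and `s > 0`, the function
`h(z) = log f(z) - log f(z+s) = -αs + Σₙ (Log(1+z/aₙ) - Log(1+(z+s)/aₙ) + s/aₙ)`
is a Pick function, and `h(iy)/(iy) → 0` as `y → ∞`. -/
theorem stmt16 (a : ℕ → ℝ) (ha : 0 < a 0) (hmono : Monotone a)
    (hsum : Summable (fun n : ℕ => 1 / (a n) ^ 2))
    (α β : ℝ) (f : ℂ → ℂ)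
    (hf : ∀ z : ℂ, f z = Complex.exp (α * z + β) *
      ∏' n : ℕ, ((1 + z / (a n : ℂ)) * Complex.exp (-z / (a n : ℂ))))
    (s : ℝ) (hs : 0 < s) (h : ℂ → ℂ)
    (hh : ∀ z : ℂ, ¬(z.im = 0 ∧ z.re ≤ 0) →
      h z = -(α * s : ℂ) + ∑' n : ℕ,
        (Complex.log (1 + z / (a n : ℂ)) - Complex.log (1 + (z + (s : ℂ)) / (a n : ℂ))
          + (s / a n : ℝ))) :
    (∀ z : ℂ, 0 < z.im → 0 ≤ (h z).im) ∧
    Tendsto (fun y : ℝ => h ((y : ℂ) * Complex.I) / ((y : ℂ) * Complex.I))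
      atTop (nhds 0) := by
  have a_pos (n : ℕ) : 0 < a n := ha.trans_le (hmono n.zero_le)
  have h_eq {z : ℂ} (hz : ¬(z.im = 0 ∧ z.re ≤ 0)) : h z = logShift a α s z := by
    simp only [hh z hz, logShift, logPrimaryFactor_div_sub_logPrimaryFactor_add_div,
      Complex.ofReal_div]
  refine ⟨fun z hz => ?_, ?_⟩
  · rw [h_eq fun hz_real => hz.ne' hz_real.1]
    exact im_logShift_nonneg a_pos hsum α hs.le hz
  · have tendsto_logShift_imag := (tendsto_logShift_div a_pos hsum α (s := s) hs.le).comp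
      tendsto_ofReal_mul_I_cobounded_rightHalfPlane
    refine tendsto_logShift_imag.congr' ?_
    filter_upwards [eventually_gt_atTop 0] with y hy
    rw [Function.comp_apply, h_eq]
    simp [hy.ne']
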